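/- arXiv:2403.00693 — 2 statements merged into one kernel-verified Lean document; each statement's English description precedes it below -/
import Mathlib

section
/- There exists a real number a ∈ (0, 1/7) such that the iterated function system 𝒮₁(a) = {x/7, x/7 + a, x/7 + 6/7} does not satisfy the convex finite type condition, and moreover the weak separation property holds quantitatively with constant 4/7: for every k ≥ 0 and all words σ, τ of length k over {1,2,3}, either a_{σ,τ} = 0 or |a_{σ,τ}| ≥ 4/7. -/
open Set

/-- The IFS 𝒮₁(a) = {x/7, x/7 + a, x/7 + 6/7} on ℝ. -/
noncomputable def S1 (a : ℝ) : Fin 3 → ℝ → ℝ :=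
  ![fun x => x / 7, fun x => x / 7 + a, fun x => x / 7 + 6 / 7]

/-- For a word σ = (s₁,…,s_k), the composition S_σ = S_{s₁} ∘ ⋯ ∘ S_{s_k}. -/
noncomputable def Sw1 (a : ℝ) : List (Fin 3) → ℝ → ℝ
  | [] => id
  | i :: σ => S1 a i ∘ Sw1 a σ

/-- For words σ, τ of the same length k, S_σ⁻¹ ∘ S_τ is the translation by
`amt1 a σ τ = 7 ^ k * (S_τ(0) − S_σ(0))`. -/
noncomputable def amt1 (a : ℝ) (σ τ : List (Fin 3)) : ℝ :=
  7 ^ σ.length * (Sw1 a τ 0 - Sw1 a σ 0)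

/-- The weak separation property for 𝒮₁(a): the nonzero translation amounts
`a_{σ,τ}` over pairs of words of equal length are bounded away from 0. -/
def WSP1 (a : ℝ) : Prop :=
  ∃ ε > 0, ∀ σ τ : List (Fin 3), σ.length = τ.length →
    amt1 a σ τ ≠ 0 → ε ≤ |amt1 a σ τ|

/-- The neighbourhood type of a word σ relative to the open interval (0,1). -/
noncomputable def Ntype1 (a : ℝ) (σ : List (Fin 3)) : Set ℝ :=
  { t | ∃ τ : List (Fin 3), τ.length = σ.length ∧
      (Sw1 a σ '' Ioo 0 1 ∩ Sw1 a τ '' Ioo 0 1).Nonempty ∧ t = amt1 a σ τ }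

/-- The convex finite type condition: only finitely many neighbourhood types
relative to (0,1). -/
def FTCco1 (a : ℝ) : Prop := (Set.range (Ntype1 a)).Finite

/-!
For `x` real let `‖x‖` be its distance to the nearest integer. Suppose `‖7 ^ n * x‖ ≤ 1 / 7` for all
`n`, and choose `a` with `7 * a = 1 - (7 * a + 2) * ‖x‖`. Extending the words by one letter and
possibly exchanging them turns a translation amount `t = 1 - y` into `7 * t - 6` or into
`-(7 * t + 7 * a - 6)`; that is, `y` becomes `7 * y` or `7 * a + 2 - 7 * y`. After rescaling by
`7 * a + 2` these are the two branches along which `‖7 ^ n * x‖` evolves, so the orbit of `x` under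
multiplication by `7` produces the translation amounts `1 - (7 * a + 2) * ‖7 ^ n * x‖`. All of them
are at least `4 / 7`, and extending the words in any other way makes the translation amount at least
`1` in absolute value, which gives the separation. If moreover `x` is irrational, these amounts are
pairwise distinct, and the convex finite type condition fails. A suitable `x` is found among the
uncountably many numbers whose base-`7` digits are all `0` or `6`.
-/

section DistanceToIntegers

/-- The distance `‖x‖` from a real number to the nearest integer, which measures the size of the
points of an orbit of multiplication by an integer modulo `1`. -/
noncomputable def distInt (x : ℝ) : ℝ := |x - round x|

theorem distInt_nonneg (x : ℝ) : 0 ≤ distInt x := abs_nonneg _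

theorem distInt_le_abs_sub (x : ℝ) (z : ℤ) : distInt x ≤ |x - z| := round_le x z

theorem distInt_intCast_add (z : ℤ) (x : ℝ) : distInt (z + x) = distInt x := by
  simp only [distInt, round_intCast_add, Int.cast_add, add_sub_add_left_eq_sub]

theorem distInt_pos {x : ℝ} (hx : Irrational x) : 0 < distInt x :=
  abs_pos.2 (sub_ne_zero.2 (hx.ne_int _))

theorem exists_sub_or_add_eq_intCast_of_distInt_eq {x y : ℝ} (h : distInt x = distInt y) :
    ∃ z : ℤ, x - y = z ∨ x + y = z := by
  rcases abs_eq_abs.1 h with h | h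
  · exact ⟨round x - round y, Or.inl (by push_cast; linarith)⟩
  · exact ⟨round x + round y, Or.inr (by push_cast; linarith)⟩

theorem distInt_eq_abs_or_one_sub_abs {x : ℝ} (hx : |x| ≤ 1) :
    distInt x = |x| ∨ distInt x = 1 - |x| := by
  obtain ⟨hx_lower, hx_upper⟩ := abs_le.1 hx
  obtain ⟨hr_lower, hr_upper⟩ := abs_le.1 (abs_sub_round x)
  have h_lower : -2 < round x := by
    have : (-2 : ℝ) < round x := by linarith
    exact_mod_cast this
  have h_upper : round x < 2 := by
    have : (round x : ℝ) < 2 := by linarith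
    exact_mod_cast this
  obtain h | h | h : round x = -1 ∨ round x = 0 ∨ round x = 1 := by omega
  all_goals simp only [distInt, h, Int.cast_neg, Int.cast_one, Int.cast_zero] at hr_lower hr_upper ⊢
  · right
    rw [abs_of_nonneg (by linarith), abs_of_neg (by linarith)]
    ring
  · left
    rw [sub_zero]
  · right
    rw [abs_of_nonpos (by linarith), abs_of_pos (by linarith)]
    ring

theorem distInt_natCast_mul_eq_or {b : ℕ} {x : ℝ} (hx : b * distInt x ≤ 1) :
    distInt (b * x) = b * distInt x ∨ distInt (b * x) = 1 - b * distInt x := by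
  have h_abs : |b * (x - round x)| = b * distInt x := by
    rw [abs_mul, Nat.abs_cast, distInt]
  have h_dist : distInt (b * (x - round x)) = distInt (b * x) := by
    rw [← distInt_intCast_add (b * round x)]
    congr 1
    push_cast
    ring
  rw [← h_abs] at hx ⊢
  rw [← h_dist]
  exact distInt_eq_abs_or_one_sub_abs hx

theorem distInt_pow_mul_injective {b : ℕ} (hb : 2 ≤ b) {x : ℝ} (hx : Irrational x) :
    Function.Injective fun n : ℕ => distInt (b ^ n * x) := by
  intro m n h
  by_contra hmn
  have h_sub : (b : ℤ) ^ m - b ^ n ≠ 0 :=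
    sub_ne_zero.2 fun h => hmn (Nat.pow_right_injective hb (by exact_mod_cast h))
  have h_add : (b : ℤ) ^ m + b ^ n ≠ 0 := by positivity
  obtain ⟨z, hz | hz⟩ := exists_sub_or_add_eq_intCast_of_distInt_eq h
  · exact (hx.intCast_mul h_sub).ne_int z (by push_cast; linarith)
  · exact (hx.intCast_mul h_add).ne_int z (by push_cast; linarith)

end DistanceToIntegers

section ExtremalDigits

/-- The number in `[0, 1]` whose base-`b` digits are `b - 1` where `f` is true and `0` where it is
false; multiplication by `b` keeps such numbers within `1 / b` of the integers. -/
noncomputable def ofExtremalDigits (b : ℕ) (f : ℕ → Bool) : ℝ :=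
  (b - 1) / b * Cardinal.cantorFunction (1 / b) f

variable {b : ℕ}

theorem mul_ofExtremalDigits (hb : 2 ≤ b) (f : ℕ → Bool) :
    b * ofExtremalDigits b f =
      cond (f 0) ((b : ℝ) - 1) 0 + ofExtremalDigits b fun n => f (n + 1) := by
  have hb' : (2 : ℝ) ≤ b := by exact_mod_cast hb
  have h_lt : 1 / (b : ℝ) < 1 := (div_lt_one (by linarith)).2 (by linarith)
  rw [ofExtremalDigits, ofExtremalDigits, Cardinal.cantorFunction_succ f (by positivity) h_lt]
  have hb0 : (b : ℝ) ≠ 0 := by linarith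
  cases f 0
  · rw [cond_false, cond_false]
    field_simp
    ring
  · rw [cond_true, cond_true]
    field_simp

theorem ofExtremalDigits_mem_Icc (hb : 2 ≤ b) (f : ℕ → Bool) :
    ofExtremalDigits b f ∈ Icc (0 : ℝ) 1 := by
  have hb' : (2 : ℝ) ≤ b := by exact_mod_cast hb
  have h_lt : 1 / (b : ℝ) < 1 := (div_lt_one (by linarith)).2 (by linarith)
  have h_factor : 0 ≤ ((b : ℝ) - 1) / b := div_nonneg (by linarith) (by linarith)
  have h_nonneg : 0 ≤ Cardinal.cantorFunction (1 / b) f :=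
    tsum_nonneg fun _ => Cardinal.cantorFunctionAux_nonneg (by positivity)
  have h_all_true : ofExtremalDigits b (fun _ => true) = 1 := by
    have h := mul_ofExtremalDigits hb fun _ => true
    rw [cond_true] at h
    have h_cancel : ((b : ℝ) - 1) * ofExtremalDigits b (fun _ => true) = (b - 1) * 1 := by
      linarith
    exact mul_left_cancel₀ (by linarith) h_cancel
  refine ⟨mul_nonneg h_factor h_nonneg, h_all_true ▸ ?_⟩
  exact mul_le_mul_of_nonneg_left
    (Cardinal.cantorFunction_le (by positivity) h_lt fun _ _ => rfl) h_factor

theorem ofExtremalDigits_injective (hb : 3 ≤ b) : Function.Injective (ofExtremalDigits b) := by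
  have hb' : (3 : ℝ) ≤ b := by exact_mod_cast hb
  have h_lt : 1 / (b : ℝ) < 1 / 2 := one_div_lt_one_div_of_lt (by norm_num) (by linarith)
  have h_factor : ((b : ℝ) - 1) / b ≠ 0 := (div_pos (by linarith) (by linarith)).ne'
  exact (mul_right_injective₀ h_factor).comp
    (Cardinal.cantorFunction_injective (by positivity) h_lt)

theorem distInt_ofExtremalDigits_le (hb : 2 ≤ b) (f : ℕ → Bool) :
    distInt (ofExtremalDigits b f) ≤ 1 / b := by
  have hb_pos : (0 : ℝ) < b := by exact_mod_cast (by omega : 0 < b)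
  obtain ⟨h_nonneg, h_le_one⟩ := ofExtremalDigits_mem_Icc hb fun n => f (n + 1)
  obtain ⟨z, hz⟩ : ∃ z : ℤ, |b * ofExtremalDigits b f - b * z| ≤ 1 := by
    rw [mul_ofExtremalDigits hb]
    cases f 0
    · refine ⟨0, ?_⟩
      rw [cond_false, Int.cast_zero]
      exact abs_le.2 ⟨by linarith, by linarith⟩
    · refine ⟨1, ?_⟩
      rw [cond_true, Int.cast_one]
      exact abs_le.2 ⟨by linarith, by linarith⟩
  rw [le_div_iff₀' hb_pos]
  calc b * distInt (ofExtremalDigits b f)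
      ≤ b * |ofExtremalDigits b f - z| := by gcongr; exact distInt_le_abs_sub _ _
    _ = |b * ofExtremalDigits b f - b * z| := by rw [← mul_sub, abs_mul, Nat.abs_cast]
    _ ≤ 1 := hz

theorem distInt_pow_succ_mul_ofExtremalDigits (hb : 2 ≤ b) (f : ℕ → Bool) (n : ℕ) :
    distInt (b ^ (n + 1) * ofExtremalDigits b f) =
      distInt (b ^ n * ofExtremalDigits b fun k => f (k + 1)) := by
  rw [pow_succ, mul_assoc, mul_ofExtremalDigits hb, mul_add,
    ← distInt_intCast_add (b ^ n * cond (f 0) ((b : ℤ) - 1) 0) (b ^ n * _)]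
  cases f 0 <;> simp

theorem distInt_pow_mul_ofExtremalDigits_le (hb : 2 ≤ b) (f : ℕ → Bool) (n : ℕ) :
    distInt (b ^ n * ofExtremalDigits b f) ≤ 1 / b := by
  induction n generalizing f with
  | zero => simpa only [pow_zero, one_mul] using distInt_ofExtremalDigits_le hb f
  | succ n ih => exact (distInt_pow_succ_mul_ofExtremalDigits hb f n).trans_le (ih _)

theorem exists_irrational_of_injective {α : Type*} [Uncountable α] {f : α → ℝ}
    (hf : Function.Injective f) : ∃ i, Irrational (f i) := by
  by_contra! h
  choose q hq using fun i => not_not.1 (h i)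
  have h_inj : Function.Injective q := fun i j hij => hf (by rw [← hq, ← hq, hij])
  exact not_countable h_inj.countable

theorem exists_irrational_distInt_pow_mul_le (hb : 3 ≤ b) :
    ∃ x : ℝ, Irrational x ∧ ∀ n : ℕ, distInt (b ^ n * x) ≤ 1 / b := by
  have : Uncountable (ℕ → Bool) := by
    simp [← Cardinal.aleph0_lt_mk_iff, Cardinal.aleph0_lt_continuum]
  obtain ⟨f, hf⟩ := exists_irrational_of_injective (ofExtremalDigits_injective hb)
  exact ⟨ofExtremalDigits b f, hf, distInt_pow_mul_ofExtremalDigits_le (by omega) f⟩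

end ExtremalDigits

section TranslationAmounts

variable {a : ℝ}

theorem S1_zero (x : ℝ) : S1 a 0 x = x / 7 := rfl

theorem S1_one (x : ℝ) : S1 a 1 x = x / 7 + a := rfl

theorem S1_two (x : ℝ) : S1 a 2 x = x / 7 + 6 / 7 := rfl

theorem S1_apply_zero_eq_or (i : Fin 3) : S1 a i 0 = 0 ∨ S1 a i 0 = a ∨ S1 a i 0 = 6 / 7 := by
  fin_cases i <;> simp [S1]

theorem S1_eq_add_div (i : Fin 3) (x : ℝ) : S1 a i x = S1 a i 0 + x / 7 := by
  fin_cases i <;> simp [S1, add_comm]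

theorem Sw1_eq_add_div (σ : List (Fin 3)) (x : ℝ) :
    Sw1 a σ x = Sw1 a σ 0 + x / 7 ^ σ.length := by
  induction σ with
  | nil => simp [Sw1]
  | cons i σ ih =>
    simp only [Sw1, Function.comp_apply, List.length_cons]
    rw [ih, S1_eq_add_div, S1_eq_add_div i (Sw1 a σ 0), pow_succ]
    ring

theorem Sw1_append (σ τ : List (Fin 3)) (x : ℝ) : Sw1 a (σ ++ τ) x = Sw1 a σ (Sw1 a τ x) := by
  induction σ with
  | nil => rfl
  | cons i σ ih => simp only [List.cons_append, Sw1, Function.comp_apply, ih]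

theorem Sw1_eq_Sw1_add_amt1 {σ τ : List (Fin 3)} (h : σ.length = τ.length) (x : ℝ) :
    Sw1 a τ x = Sw1 a σ (x + amt1 a σ τ) := by
  rw [Sw1_eq_add_div τ, Sw1_eq_add_div σ, amt1, ← h]
  field_simp
  ring

theorem amt1_swap {σ τ : List (Fin 3)} (h : σ.length = τ.length) :
    amt1 a τ σ = -amt1 a σ τ := by
  rw [amt1, amt1, h]
  ring

/-- The amount `7 (S_j(0) - S_i(0))` by which `7 a_{σ,τ}` changes when the words `σ` and `τ` are
extended by the letters `i` and `j`. -/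
noncomputable def increment (a : ℝ) (i j : Fin 3) : ℝ := 7 * (S1 a j 0 - S1 a i 0)

theorem neg_increment (i j : Fin 3) : -increment a i j = increment a j i := by
  rw [increment, increment]
  ring

theorem increment_zero_one : increment a 0 1 = 7 * a := by
  rw [increment, S1_zero, S1_one]
  ring

theorem increment_two_zero : increment a 2 0 = -6 := by
  rw [increment, S1_zero, S1_two]
  ring

theorem increment_two_one : increment a 2 1 = 7 * a - 6 := by
  rw [increment, S1_one, S1_two]
  ring

theorem increment_eq_or_neg_one_le (ha : a ∈ Icc 0 (1 / 7)) (i j : Fin 3) :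
    increment a i j = -6 ∨ increment a i j = 7 * a - 6 ∨ -1 ≤ increment a i j := by
  obtain ⟨h_lower, h_upper⟩ := ha
  rw [increment]
  rcases S1_apply_zero_eq_or (a := a) i with hi | hi | hi <;>
    rcases S1_apply_zero_eq_or (a := a) j with hj | hj | hj <;> rw [hi, hj] <;> grind

theorem abs_increment_eq_or_one_le (ha : a ∈ Icc 0 (1 / 7)) (i j : Fin 3) :
    increment a i j = 0 ∨ |increment a i j| = 7 * a ∨ 1 ≤ |increment a i j| := by
  obtain ⟨h_lower, h_upper⟩ := ha
  rw [increment]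
  rcases S1_apply_zero_eq_or (a := a) i with hi | hi | hi <;>
    rcases S1_apply_zero_eq_or (a := a) j with hj | hj | hj <;> rw [hi, hj] <;> grind

theorem amt1_append_singleton {σ τ : List (Fin 3)} (h : σ.length = τ.length) (i j : Fin 3) :
    amt1 a (σ ++ [i]) (τ ++ [j]) = 7 * amt1 a σ τ + increment a i j := by
  have h_single (k : Fin 3) : Sw1 a [k] 0 = S1 a k 0 := rfl
  rw [amt1, amt1, increment, Sw1_append, Sw1_append, h_single, h_single, Sw1_eq_add_div τ,
    Sw1_eq_add_div σ, ← h, List.length_append, List.length_singleton]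
  field_simp
  ring

variable (a) in
/-- The set of all translation amounts `a_{σ,τ}`, over pairs of words of equal length. -/
def translationAmounts : Set ℝ :=
  {t | ∃ σ τ : List (Fin 3), σ.length = τ.length ∧ t = amt1 a σ τ}

theorem zero_mem_translationAmounts : 0 ∈ translationAmounts a :=
  ⟨[], [], rfl, by simp [amt1]⟩

theorem neg_mem_translationAmounts {t : ℝ} (ht : t ∈ translationAmounts a) :
    -t ∈ translationAmounts a := by
  obtain ⟨σ, τ, h, rfl⟩ := ht
  exact ⟨τ, σ, h.symm, (amt1_swap h).symm⟩

theorem seven_mul_add_increment_mem_translationAmounts {t : ℝ} (ht : t ∈ translationAmounts a)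
    (i j : Fin 3) :
    7 * t + increment a i j ∈ translationAmounts a := by
  obtain ⟨σ, τ, h, rfl⟩ := ht
  exact ⟨σ ++ [i], τ ++ [j], by simp [h], (amt1_append_singleton h i j).symm⟩

theorem translationAmounts_subset {s : Set ℝ} (zero_mem : 0 ∈ s)
    (add_increment_mem : ∀ t ∈ s, ∀ i j, 7 * t + increment a i j ∈ s) :
    translationAmounts a ⊆ s := by
  rintro _ ⟨σ, τ, h, rfl⟩
  induction σ using List.reverseRecOn generalizing τ with
  | nil =>
    obtain rfl : τ = [] := List.length_eq_zero_iff.1 h.symm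
    simpa [amt1] using zero_mem
  | append_singleton σ i ih =>
    obtain rfl | ⟨τ, j, rfl⟩ := τ.eq_nil_or_concat'
    · simp at h
    have h' : σ.length = τ.length := by simpa using h
    rw [amt1_append_singleton h']
    exact add_increment_mem _ (ih τ h') i j

theorem amt1_mem_Ntype1 {σ τ : List (Fin 3)} (h : σ.length = τ.length)
    (ht : amt1 a σ τ ∈ Ioo (-1) 1) : amt1 a σ τ ∈ Ntype1 a σ := by
  obtain ⟨h_lower, h_upper⟩ := ht
  refine ⟨τ, h.symm, ⟨Sw1 a τ ((1 - amt1 a σ τ) / 2), ?_, ?_⟩, rfl⟩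
  · rw [Sw1_eq_Sw1_add_amt1 h]
    exact mem_image_of_mem _ ⟨by linarith, by linarith⟩
  · exact mem_image_of_mem _ ⟨by linarith, by linarith⟩

theorem finite_Ntype1 (σ : List (Fin 3)) : (Ntype1 a σ).Finite := by
  refine ((List.finite_length_eq (Fin 3) σ.length).image (amt1 a σ)).subset ?_
  rintro _ ⟨τ, h, -, rfl⟩
  exact mem_image_of_mem _ h

theorem not_FTCco1_of_infinite (h : (translationAmounts a ∩ Ioo (-1) 1).Infinite) :
    ¬ FTCco1 a := by
  intro h_types
  have h_union : (⋃₀ range (Ntype1 a)).Finite :=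
    h_types.sUnion (forall_mem_range.2 finite_Ntype1)
  refine h (h_union.subset ?_)
  rintro _ ⟨⟨σ, τ, hl, rfl⟩, ht⟩
  exact ⟨_, mem_range_self σ, amt1_mem_Ntype1 hl ht⟩

end TranslationAmounts

section OrbitAmounts

/-- The translation amount attached to the `n`-th point of the orbit of `x` under multiplication
by `7`. -/
noncomputable def orbitAmount (a x : ℝ) (n : ℕ) : ℝ := 1 - (7 * a + 2) * distInt (7 ^ n * x)

variable {a x : ℝ}

theorem parameter_mem_Icc (hx : ∀ n : ℕ, distInt (7 ^ n * x) ≤ 1 / 7)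
    (ha : orbitAmount a x 0 = 7 * a) : a ∈ Icc (5 / 56) (1 / 7) := by
  have h_nonneg := distInt_nonneg x
  have h_le := hx 0
  simp only [orbitAmount, pow_zero, one_mul] at ha h_le
  constructor <;> nlinarith

theorem four_sevenths_le_orbitAmount (hx : ∀ n : ℕ, distInt (7 ^ n * x) ≤ 1 / 7)
    (ha : a ∈ Icc 0 (1 / 7)) (n : ℕ) : 4 / 7 ≤ orbitAmount a x n := by
  have h : (7 * a + 2) * distInt (7 ^ n * x) ≤ 3 * (1 / 7) :=
    mul_le_mul (by linarith [ha.2]) (hx n) (distInt_nonneg _) (by norm_num)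
  rw [orbitAmount]
  linarith

theorem orbitAmount_lt_one (hx : Irrational x) (ha : 0 ≤ a) (n : ℕ) : orbitAmount a x n < 1 := by
  have h_irr : Irrational (7 ^ n * x) := by
    exact_mod_cast hx.natCast_mul (pow_ne_zero n (by norm_num : 7 ≠ 0))
  exact sub_lt_self 1 (mul_pos (by linarith) (distInt_pos h_irr))

theorem orbitAmount_injective (hx : Irrational x) (ha : 0 ≤ a) :
    Function.Injective (orbitAmount a x) := by
  intro m n h
  have h_scale : 7 * a + 2 ≠ 0 := by linarith
  exact distInt_pow_mul_injective (b := 7) (by norm_num) hx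
    (mul_left_cancel₀ h_scale (sub_right_injective h))

theorem orbitAmount_succ (hx : ∀ n : ℕ, distInt (7 ^ n * x) ≤ 1 / 7) (n : ℕ) :
    orbitAmount a x (n + 1) = 7 * orbitAmount a x n - 6 ∨
      orbitAmount a x (n + 1) = -(7 * orbitAmount a x n + (7 * a - 6)) := by
  have h_step := distInt_natCast_mul_eq_or (b := 7) (x := 7 ^ n * x) (by
    push_cast
    linarith [hx n])
  rw [Nat.cast_ofNat, ← mul_assoc, ← pow_succ'] at h_step
  simp only [orbitAmount]
  rcases h_step with h | h <;> rw [h]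
  · left
    ring
  · right
    ring

theorem orbitAmount_mem_translationAmounts (hx : ∀ n : ℕ, distInt (7 ^ n * x) ≤ 1 / 7)
    (ha : orbitAmount a x 0 = 7 * a) (n : ℕ) : orbitAmount a x n ∈ translationAmounts a := by
  induction n with
  | zero =>
    simpa only [ha, mul_zero, zero_add, increment_zero_one] using
      seven_mul_add_increment_mem_translationAmounts (a := a) zero_mem_translationAmounts 0 1
  | succ n ih =>
    rcases orbitAmount_succ (a := a) hx n with h | h <;> rw [h]
    · rw [sub_eq_add_neg, ← increment_two_zero (a := a)]
      exact seven_mul_add_increment_mem_translationAmounts ih 2 0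
    · rw [← increment_two_one]
      exact neg_mem_translationAmounts (seven_mul_add_increment_mem_translationAmounts ih 2 1)

theorem not_FTCco1_of_irrational (hx : ∀ n : ℕ, distInt (7 ^ n * x) ≤ 1 / 7)
    (hx_irr : Irrational x) (ha : orbitAmount a x 0 = 7 * a) : ¬ FTCco1 a := by
  obtain ⟨ha_lower, ha_upper⟩ := parameter_mem_Icc hx ha
  have ha_nonneg : 0 ≤ a := by linarith
  refine not_FTCco1_of_infinite
    ((infinite_range_of_injective (orbitAmount_injective hx_irr ha_nonneg)).mono ?_)
  rintro _ ⟨n, rfl⟩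
  refine ⟨orbitAmount_mem_translationAmounts hx ha n, ?_, orbitAmount_lt_one hx_irr ha_nonneg n⟩
  linarith [four_sevenths_le_orbitAmount hx ⟨ha_nonneg, ha_upper⟩ n]

/-- The reals that are `0`, of absolute value at least `1`, or an orbit amount up to sign. This set
contains `0` and is stable under extending words by one letter, so it contains all translation
amounts. -/
def separatedSet (a x : ℝ) : Set ℝ := {t | t = 0 ∨ 1 ≤ |t| ∨ ∃ n, |t| = orbitAmount a x n}

theorem neg_mem_separatedSet {t : ℝ} : -t ∈ separatedSet a x ↔ t ∈ separatedSet a x := by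
  simp only [separatedSet, mem_ofPred_eq, neg_eq_zero, abs_neg]

theorem mem_separatedSet_of_one_le {t : ℝ} (ht : 1 ≤ t) : t ∈ separatedSet a x :=
  Or.inr (Or.inl (ht.trans (le_abs_self t)))

theorem mem_separatedSet_of_eq_orbitAmount {t : ℝ} {n : ℕ} (ht_nonneg : 0 ≤ t)
    (ht : t = orbitAmount a x n) : t ∈ separatedSet a x :=
  Or.inr (Or.inr ⟨n, (abs_of_nonneg ht_nonneg).trans ht⟩)

theorem increment_mem_separatedSet (ha : a ∈ Icc 0 (1 / 7)) (ha_orbit : orbitAmount a x 0 = 7 * a)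
    (i j : Fin 3) : increment a i j ∈ separatedSet a x :=
  (abs_increment_eq_or_one_le ha i j).imp_right
    (Or.rec (fun h => Or.inr ⟨0, h.trans ha_orbit.symm⟩) Or.inl)

theorem seven_mul_orbitAmount_add_increment_mem_separatedSet
    (hx : ∀ n : ℕ, distInt (7 ^ n * x) ≤ 1 / 7)
    (ha : orbitAmount a x 0 = 7 * a) (n : ℕ) (i j : Fin 3) :
    7 * orbitAmount a x n + increment a i j ∈ separatedSet a x := by
  obtain ⟨ha_lower, ha_upper⟩ := parameter_mem_Icc hx ha
  have ha_mem : a ∈ Icc 0 (1 / 7) := ⟨by linarith, ha_upper⟩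
  have h_amount := four_sevenths_le_orbitAmount hx ha_mem n
  have h_next := four_sevenths_le_orbitAmount hx ha_mem (n + 1)
  rcases increment_eq_or_neg_one_le ha_mem i j with hd | hd | hd
  · rw [hd]
    rcases orbitAmount_succ (a := a) hx n with h | h
    · exact mem_separatedSet_of_eq_orbitAmount (n := n + 1) (by linarith) (by linarith)
    · exact neg_mem_separatedSet.1 (mem_separatedSet_of_one_le (by linarith))
  · rw [hd]
    rcases orbitAmount_succ (a := a) hx n with h | h
    · exact mem_separatedSet_of_one_le (by linarith)
    · exact neg_mem_separatedSet.1
        (mem_separatedSet_of_eq_orbitAmount (n := n + 1) (by linarith) (by linarith))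
  · exact mem_separatedSet_of_one_le (by linarith)

theorem seven_mul_add_increment_mem_separatedSet_of_nonneg
    (hx : ∀ n : ℕ, distInt (7 ^ n * x) ≤ 1 / 7)
    (ha : orbitAmount a x 0 = 7 * a) {t : ℝ} (ht_nonneg : 0 ≤ t) (ht : t ∈ separatedSet a x)
    (i j : Fin 3) : 7 * t + increment a i j ∈ separatedSet a x := by
  obtain ⟨ha_lower, ha_upper⟩ := parameter_mem_Icc hx ha
  have ha_mem : a ∈ Icc 0 (1 / 7) := ⟨by linarith, ha_upper⟩
  rcases ht with rfl | ht | ⟨n, ht⟩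
  · rw [mul_zero, zero_add]
    exact increment_mem_separatedSet ha_mem ha i j
  · rw [abs_of_nonneg ht_nonneg] at ht
    have h_increment : -6 ≤ increment a i j := by
      rcases increment_eq_or_neg_one_le ha_mem i j with h | h | h <;> linarith
    exact mem_separatedSet_of_one_le (by linarith)
  · rw [abs_of_nonneg ht_nonneg] at ht
    exact ht ▸ seven_mul_orbitAmount_add_increment_mem_separatedSet hx ha n i j

theorem seven_mul_add_increment_mem_separatedSet (hx : ∀ n : ℕ, distInt (7 ^ n * x) ≤ 1 / 7)
    (ha : orbitAmount a x 0 = 7 * a) {t : ℝ} (ht : t ∈ separatedSet a x) (i j : Fin 3) :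
    7 * t + increment a i j ∈ separatedSet a x := by
  rcases le_total 0 t with h | h
  · exact seven_mul_add_increment_mem_separatedSet_of_nonneg hx ha h ht i j
  · have h_neg := seven_mul_add_increment_mem_separatedSet_of_nonneg hx ha (neg_nonneg.2 h)
      (neg_mem_separatedSet.2 ht) j i
    rw [← neg_increment, mul_neg, ← neg_add] at h_neg
    exact neg_mem_separatedSet.1 h_neg

theorem translationAmounts_subset_separatedSet (hx : ∀ n : ℕ, distInt (7 ^ n * x) ≤ 1 / 7)
    (ha : orbitAmount a x 0 = 7 * a) : translationAmounts a ⊆ separatedSet a x :=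
  translationAmounts_subset (Or.inl rfl)
    fun _ ht => seven_mul_add_increment_mem_separatedSet hx ha ht

theorem amt1_eq_zero_or_four_sevenths_le_abs (hx : ∀ n : ℕ, distInt (7 ^ n * x) ≤ 1 / 7)
    (ha : orbitAmount a x 0 = 7 * a) {σ τ : List (Fin 3)} (h : σ.length = τ.length) :
    amt1 a σ τ = 0 ∨ 4 / 7 ≤ |amt1 a σ τ| := by
  obtain ⟨ha_lower, ha_upper⟩ := parameter_mem_Icc hx ha
  rcases translationAmounts_subset_separatedSet hx ha ⟨σ, τ, h, rfl⟩ with ht | ht | ⟨n, ht⟩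
  · exact Or.inl ht
  · exact Or.inr (by linarith)
  · exact Or.inr (ht ▸ four_sevenths_le_orbitAmount hx ⟨by linarith, ha_upper⟩ n)

end OrbitAmounts

theorem stmt3 : ∃ a ∈ Ioo (0 : ℝ) (1 / 7),
    ¬ FTCco1 a ∧
    ∀ σ τ : List (Fin 3), σ.length = τ.length →
      amt1 a σ τ = 0 ∨ 4 / 7 ≤ |amt1 a σ τ| := by
  obtain ⟨x, hx_irr, hx⟩ := exists_irrational_distInt_pow_mul_le (b := 7) (by norm_num)
  simp only [Nat.cast_ofNat] at hx
  have h_pos : 0 < distInt x := distInt_pos hx_irr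
  obtain ⟨a, ha⟩ : ∃ a, orbitAmount a x 0 = 7 * a := by
    refine ⟨(1 - 2 * distInt x) / (7 * (1 + distInt x)), ?_⟩
    rw [orbitAmount, pow_zero, one_mul]
    field_simp
    ring
  have ha_pos : 0 < a := by linarith [(parameter_mem_Icc hx ha).1]
  have ha_lt : a < 1 / 7 := by linarith [orbitAmount_lt_one hx_irr ha_pos.le 0]
  exact ⟨a, ⟨ha_pos, ha_lt⟩, not_FTCco1_of_irrational hx hx_irr ha,
    fun _ _ h => amt1_eq_zero_or_four_sevenths_le_abs hx ha h⟩
end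

section
/- There exists a real number a ∈ (0, 1/16) such that the iterated function system 𝒮₂(a) = {x/16, x/16 + a, x/16 + 15/16 − 16a, x/16 + 11/16, x/16 + 15/16} satisfies the weak separation property and the finite type condition (there is a nonempty open set V with S_i(V) ⊆ V for all i and only finitely many neighbourhood types relative to V), but satisfies neither the open set condition, nor the convex open set condition, nor the convex finite type condition. -/
open Set

/-- The IFS 𝒮₂(a) = {x/16, x/16 + a, x/16 + 15/16 − 16a, x/16 + 11/16, x/16 + 15/16}. -/
noncomputable def S2 (a : ℝ) : Fin 5 → ℝ → ℝ :=
  ![fun x => x / 16, fun x => x / 16 + a, fun x => x / 16 + 15 / 16 - 16 * a,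
    fun x => x / 16 + 11 / 16, fun x => x / 16 + 15 / 16]

/-- For a word σ = (s₁,…,s_k), the composition S_σ = S_{s₁} ∘ ⋯ ∘ S_{s_k}. -/
noncomputable def Sw2 (a : ℝ) : List (Fin 5) → ℝ → ℝ
  | [] => id
  | i :: σ => S2 a i ∘ Sw2 a σ

/-- For words σ, τ of the same length k, S_σ⁻¹ ∘ S_τ is the translation by
`amt2 a σ τ = 16 ^ k * (S_τ(0) − S_σ(0))`. -/
noncomputable def amt2 (a : ℝ) (σ τ : List (Fin 5)) : ℝ :=
  16 ^ σ.length * (Sw2 a τ 0 - Sw2 a σ 0)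

/-- The weak separation property for 𝒮₂(a). -/
def WSP2 (a : ℝ) : Prop :=
  ∃ ε > 0, ∀ σ τ : List (Fin 5), σ.length = τ.length →
    amt2 a σ τ ≠ 0 → ε ≤ |amt2 a σ τ|

/-- The neighbourhood type of a word σ relative to an open set V. -/
noncomputable def Ntype2 (a : ℝ) (V : Set ℝ) (σ : List (Fin 5)) : Set ℝ :=
  { t | ∃ τ : List (Fin 5), τ.length = σ.length ∧
      (Sw2 a σ '' V ∩ Sw2 a τ '' V).Nonempty ∧ t = amt2 a σ τ }

/-- The open set condition for 𝒮₂(a). -/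
def OSC2 (a : ℝ) : Prop :=
  ∃ V : Set ℝ, V.Nonempty ∧ IsOpen V ∧ (∀ i, S2 a i '' V ⊆ V) ∧
    ∀ i j, i ≠ j → S2 a i '' V ∩ S2 a j '' V = ∅

/-- The convex open set condition for 𝒮₂(a): OSC with V = (0,1). -/
def OSCco2 (a : ℝ) : Prop :=
  (∀ i, S2 a i '' Ioo 0 1 ⊆ Ioo 0 1) ∧
    ∀ i j, i ≠ j → S2 a i '' Ioo 0 1 ∩ S2 a j '' Ioo 0 1 = ∅

/-- The finite type condition for 𝒮₂(a): some nonempty open invariant V admits only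
finitely many neighbourhood types. -/
def FTC2 (a : ℝ) : Prop :=
  ∃ V : Set ℝ, V.Nonempty ∧ IsOpen V ∧ (∀ i, S2 a i '' V ⊆ V) ∧
    (Set.range (Ntype2 a V)).Finite

/-- The convex finite type condition for 𝒮₂(a): finitely many neighbourhood types
relative to (0,1). -/
def FTCco2 (a : ℝ) : Prop := (Set.range (Ntype2 a (Ioo 0 1))).Finite

/-!
Write `S_i x = (x + d_i) / 16`. Extending `σ` by `i` and `τ` by `j` turns the translation amount `t`
of `S_σ⁻¹ ∘ S_τ` into `16 t + (d_j - d_i)`. Let `x₀` be a real number whose base-16 expansion has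
only the digits `4` and `15`, starts with `15` and is not eventually periodic, let `x₁, x₂, …` be
its successive shifts, and put `a = (11 + x₀) / 256`. Once `|t| ≥ 1`, this persists under the
recursion, and the only amounts with `|t| < 1` are, up to sign, those of the chain
`0 → 16 a → x₀ → x₁ → x₂ → ⋯`. The nonzero ones exceed `1/4`, which gives weak separation, and the
infinitely many `xₙ ∈ (0, 1)` all occur as neighbours relative to `(0, 1)`.

Let `V` be the forward orbit of `(1/16, 1/8)`. If two points of `V` differ by `xₙ`, then removing
the first letter of both their addresses yields points that differ by `xₙ₊₁`; when one of the
addresses runs out, a difference of this size is impossible. Hence only `0` and `±16 a` occur as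
neighbours relative to `V`. The open set condition fails because of the exact overlap
`S₁ ∘ S₅ = S₂ ∘ S₃` (maps numbered from `1`; in the code the indices start at `0`).
-/

open scoped Pointwise

/-- The digits of `𝒮₂(a)`: the `i`-th map is `x ↦ (x + digit a i) / 16`. -/
noncomputable def digit (a : ℝ) : Fin 5 → ℝ
  | 0 => 0
  | 1 => 16 * a
  | 2 => 15 - 256 * a
  | 3 => 11
  | 4 => 15

theorem S2_apply (a : ℝ) (i : Fin 5) (x : ℝ) : S2 a i x = (x + digit a i) / 16 := by
  fin_cases i <;> simp [S2, digit] <;> ring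

theorem isOpenMap_S2 (a : ℝ) (i : Fin 5) : IsOpenMap (S2 a i) := by
  convert (affineHomeomorph (1 / 16) (digit a i / 16) (by norm_num)).isOpenMap using 1
  ext x
  rw [S2_apply, affineHomeomorph_apply]
  ring

theorem digit_mem_Icc {a : ℝ} (ha : a ∈ Icc 0 (15 / 256)) (i : Fin 5) :
    digit a i ∈ Icc 0 15 := by
  obtain ⟨h₀, h₁⟩ := ha
  constructor <;> fin_cases i <;> grind [digit]

theorem mapsTo_S2_Ioo {a : ℝ} (ha : a ∈ Icc 0 (15 / 256)) (i : Fin 5) :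
    MapsTo (S2 a i) (Ioo 0 1) (Ioo 0 1) := by
  rintro x ⟨hx₀, hx₁⟩
  obtain ⟨h₀, h₁⟩ := digit_mem_Icc ha i
  rw [S2_apply]
  constructor <;> linarith

theorem Sw2_apply (a : ℝ) (σ : List (Fin 5)) (x : ℝ) :
    Sw2 a σ x = Sw2 a σ 0 + x / 16 ^ σ.length := by
  induction σ with
  | nil => simp [Sw2]
  | cons i σ ih =>
    simp only [Sw2, Function.comp_apply, List.length_cons, S2_apply, ih, pow_succ]
    field_simp
    ring

theorem Sw2_append (a : ℝ) (σ τ : List (Fin 5)) : Sw2 a (σ ++ τ) = Sw2 a σ ∘ Sw2 a τ := by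
  induction σ with
  | nil => rfl
  | cons i σ ih => simp only [List.cons_append, Sw2, ih, Function.comp_assoc]

theorem amt2_append_singleton (a : ℝ) {σ τ : List (Fin 5)} (h : τ.length = σ.length)
    (i j : Fin 5) :
    amt2 a (σ ++ [i]) (τ ++ [j]) = 16 * amt2 a σ τ + (digit a j - digit a i) := by
  simp only [amt2, Sw2_append, Function.comp_apply, Sw2, id, S2_apply, Sw2_apply a σ (_ / _),
    Sw2_apply a τ (_ / _), h, List.length_append, List.length_singleton, pow_succ]
  field_simp
  ring

theorem Sw2_eq_Sw2_iff {a : ℝ} {σ τ : List (Fin 5)} (h : τ.length = σ.length) {x y : ℝ} :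
    Sw2 a σ x = Sw2 a τ y ↔ x - y = amt2 a σ τ := by
  rw [amt2, Sw2_apply a σ x, Sw2_apply a τ y, h]
  field_simp
  constructor <;> intro h <;> linarith

theorem image_Sw2_inter_nonempty_iff {a : ℝ} {V : Set ℝ} {σ τ : List (Fin 5)}
    (h : τ.length = σ.length) :
    (Sw2 a σ '' V ∩ Sw2 a τ '' V).Nonempty ↔ amt2 a σ τ ∈ V - V := by
  constructor
  · rintro ⟨_, ⟨x, hx, rfl⟩, y, hy, hxy⟩
    exact ⟨x, hx, y, hy, (Sw2_eq_Sw2_iff h).1 hxy.symm⟩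
  · rintro ⟨x, hx, y, hy, hxy⟩
    exact ⟨Sw2 a σ x, ⟨x, hx, rfl⟩, y, hy, ((Sw2_eq_Sw2_iff h).2 hxy).symm⟩

/-- The set of all translation amounts of the maps `S_σ⁻¹ ∘ S_τ` with `|σ| = |τ|`. -/
def translations (a : ℝ) : Set ℝ :=
  {t | ∃ σ τ : List (Fin 5), τ.length = σ.length ∧ t = amt2 a σ τ}

theorem zero_mem_translations (a : ℝ) : 0 ∈ translations a :=
  ⟨[], [], rfl, by simp [amt2]⟩

theorem step_mem_translations {a t : ℝ} (ht : t ∈ translations a) (i j : Fin 5) :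
    16 * t + (digit a j - digit a i) ∈ translations a := by
  obtain ⟨σ, τ, h, rfl⟩ := ht
  exact ⟨σ ++ [i], τ ++ [j], by simp [h], (amt2_append_singleton a h i j).symm⟩

theorem translations_subset {a : ℝ} {T : Set ℝ} (zero : 0 ∈ T)
    (step : ∀ t ∈ T, ∀ i j, 16 * t + (digit a j - digit a i) ∈ T) : translations a ⊆ T := by
  rintro _ ⟨σ, τ, h, rfl⟩
  induction σ using List.reverseRecOn generalizing τ with
  | nil => simpa [List.eq_nil_of_length_eq_zero h, amt2] using zero
  | append_singleton σ i ih =>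
    obtain rfl | ⟨τ, j, rfl⟩ := τ.eq_nil_or_concat'
    · simp at h
    · have h' : τ.length = σ.length := by simpa using h
      rw [amt2_append_singleton a h']
      exact step _ (ih τ h') i j

theorem finite_Ntype2 (a : ℝ) (V : Set ℝ) (σ : List (Fin 5)) : (Ntype2 a V σ).Finite := by
  refine ((List.finite_length_eq (Fin 5) σ.length).image (amt2 a σ)).subset ?_
  rintro _ ⟨τ, h, -, rfl⟩
  exact ⟨τ, h, rfl⟩

theorem sUnion_range_Ntype2 (a : ℝ) (V : Set ℝ) :
    ⋃₀ range (Ntype2 a V) = translations a ∩ (V - V) := by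
  ext t
  constructor
  · rintro ⟨_, ⟨σ, rfl⟩, τ, h, hne, rfl⟩
    exact ⟨⟨σ, τ, h, rfl⟩, (image_Sw2_inter_nonempty_iff h).1 hne⟩
  · rintro ⟨⟨σ, τ, h, rfl⟩, ht⟩
    exact ⟨_, ⟨σ, rfl⟩, τ, h, (image_Sw2_inter_nonempty_iff h).2 ht, rfl⟩

theorem finite_range_Ntype2_iff {a : ℝ} {V : Set ℝ} :
    (range (Ntype2 a V)).Finite ↔ (translations a ∩ (V - V)).Finite := by
  rw [← sUnion_range_Ntype2]
  refine ⟨fun h => h.sUnion ?_, fun h => h.finite_subsets.subset fun _ => subset_sUnion_of_mem⟩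
  rintro _ ⟨σ, rfl⟩
  exact finite_Ntype2 a V σ

theorem not_osc2 (a : ℝ) : ¬ OSC2 a := by
  rintro ⟨V, ⟨x, hx⟩, -, hV, hdisj⟩
  have overlap : S2 a 1 (S2 a 2 x) = S2 a 0 (S2 a 4 x) := by
    simp only [S2_apply, digit]
    ring
  have hmem : S2 a 0 (S2 a 4 x) ∈ S2 a 0 '' V ∩ S2 a 1 '' V :=
    ⟨⟨_, hV 4 ⟨x, hx, rfl⟩, rfl⟩, _, hV 2 ⟨x, hx, rfl⟩, overlap⟩
  exact (hdisj 0 1 (by decide)).le hmem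

theorem OSCco2.osc2 {a : ℝ} (h : OSCco2 a) : OSC2 a :=
  ⟨Ioo 0 1, nonempty_Ioo.2 one_pos, isOpen_Ioo, h.1, h.2⟩

/-- The smallest set containing `U` that is invariant under the maps of `𝒮₂(a)`. -/
inductive forwardOrbit (a : ℝ) (U : Set ℝ) : Set ℝ
  | base {u : ℝ} (hu : u ∈ U) : forwardOrbit a U u
  | map (i : Fin 5) {y : ℝ} (hy : forwardOrbit a U y) : forwardOrbit a U (S2 a i y)

theorem image_S2_forwardOrbit_subset (a : ℝ) (U : Set ℝ) (i : Fin 5) :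
    S2 a i '' forwardOrbit a U ⊆ forwardOrbit a U :=
  image_subset_iff.2 fun _ => .map i

theorem isOpen_forwardOrbit (a : ℝ) {U : Set ℝ} (hU : IsOpen U) :
    IsOpen (forwardOrbit a U) := by
  refine isOpen_iff_mem_nhds.2 fun y hy => ?_
  induction hy with
  | base hu => exact Filter.mem_of_superset (hU.mem_nhds hu) fun _ => .base
  | map i _ ih =>
    exact Filter.mem_of_superset ((isOpenMap_S2 a i).image_mem_nhds ih)
      (image_S2_forwardOrbit_subset a U i)

theorem forwardOrbit_subset {a : ℝ} {U W : Set ℝ} (hU : U ⊆ W)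
    (hW : ∀ i, MapsTo (S2 a i) W W) : forwardOrbit a U ⊆ W := by
  intro y hy
  induction hy with
  | base hu => exact hU hu
  | map i _ ih => exact hW i ih

theorem abs_mem_sub_self {G : Type*} [AddGroup G] [LinearOrder G] {V : Set G} {t : G}
    (ht : t ∈ V - V) : |t| ∈ V - V := by
  rcases abs_choice t with h | h <;> rw [h]
  · exact ht
  · rwa [← Set.mem_neg, neg_sub]

/-- The sequence `x` consists of the successive shifts of a base-16 expansion
`x 0 = 0.d₁d₂d₃…` with digits `4` and `15` and `d₁ = 15`, and `a = (11 + x 0) / 256`.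
The bounds are the least and greatest reals with such digits. -/
structure IsDigitShift (a : ℝ) (x : ℕ → ℝ) : Prop where
  le_apply (n : ℕ) : 4 / 15 ≤ x n
  apply_le_one (n : ℕ) : x n ≤ 1
  apply_succ (n : ℕ) : 16 * x n = 4 + x (n + 1) ∨ 16 * x n = 15 + x (n + 1)
  apply_zero : 16 * x 0 = 15 + x 1
  param_eq : 256 * a = 11 + x 0

/-- The values that `|t|` can take for `t ∈ translations a`: the chain `0, 16 a, x 0, x 1, …` of
the recursion on translation amounts, and everything from `1` on. -/
def translationNorms (a : ℝ) (x : ℕ → ℝ) : Set ℝ := {0, 16 * a} ∪ range x ∪ Ici 1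

/-- The interval whose forward orbit serves as the open set in the finite type condition. It lies
below every `x n` and is disjoint from all the translates `S_i (0, 1) - x n`. -/
def seed : Set ℝ := Ioo (1 / 16) (1 / 8)

namespace IsDigitShift

variable {a : ℝ} {x : ℕ → ℝ}

theorem le_apply_zero (h : IsDigitShift a x) : 229 / 240 ≤ x 0 := by
  linarith [h.apply_zero, h.le_apply 1]

theorem param_mem_Ioo (h : IsDigitShift a x) : a ∈ Ioo 0 (1 / 16) := by
  constructor <;> linarith [h.param_eq, h.le_apply 0, h.apply_le_one 0]

theorem param_mem_Icc (h : IsDigitShift a x) : a ∈ Icc 0 (15 / 256) := by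
  constructor <;> linarith [h.param_eq, h.le_apply 0, h.apply_le_one 0]

theorem abs_digit_sub_digit (h : IsDigitShift a x) (i j : Fin 5) :
    |digit a j - digit a i| = 0 ∨ |digit a j - digit a i| = 16 * a ∨
      1 ≤ |digit a j - digit a i| := by
  have := h.param_eq
  have := h.apply_le_one 0
  have := h.le_apply_zero
  fin_cases i <;> fin_cases j <;> grind [digit]

theorem param_step (h : IsDigitShift a x) (i j : Fin 5) :
    16 * (16 * a) + (digit a j - digit a i) = 0 ∨
      16 * (16 * a) + (digit a j - digit a i) = x 0 ∨
      1 ≤ |16 * (16 * a) + (digit a j - digit a i)| := by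
  have := h.param_eq
  have := h.apply_le_one 0
  have := h.le_apply_zero
  rw [le_abs]
  -- The first two cases occur for the pairs `(i, j) = (4, 2)` and `(3, 0)`.
  fin_cases i <;> fin_cases j <;> grind [digit]

theorem shift_step (h : IsDigitShift a x) (n : ℕ) (i j : Fin 5) :
    16 * x n + (digit a j - digit a i) = x (n + 1) ∨
      1 ≤ |16 * x n + (digit a j - digit a i)| := by
  have := h.param_eq
  have := h.apply_le_one 0
  have := h.le_apply_zero
  have := h.le_apply (n + 1)
  have := h.apply_le_one (n + 1)
  rw [le_abs]
  -- The first case occurs for `(i, j) = (4, 3)` if `16 * x n = 4 + x (n + 1)`, else for `(4, 0)`.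
  rcases h.apply_succ n with hn | hn <;> rw [hn] <;> fin_cases i <;> fin_cases j <;> grind [digit]

theorem abs_step_mem (h : IsDigitShift a x) {t : ℝ} (ht : t ∈ translationNorms a x)
    (i j : Fin 5) : |16 * t + (digit a j - digit a i)| ∈ translationNorms a x := by
  simp only [translationNorms, mem_union, mem_insert_iff, mem_singleton_iff, mem_Ici]
  rcases ht with ((rfl | rfl) | ⟨n, rfl⟩) | ht
  · rw [mul_zero, zero_add]
    have := h.abs_digit_sub_digit i j
    tauto
  · rcases h.param_step i j with h₀ | hx | h₁
    · simp [h₀]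
    · rw [hx, abs_of_nonneg (by linarith [h.le_apply 0])]
      simp
    · exact .inr h₁
  · rcases h.shift_step n i j with hx | h₁
    · rw [hx, abs_of_nonneg (by linarith [h.le_apply (n + 1)])]
      simp
    · exact .inr h₁
  · rw [mem_Ici] at ht
    refine .inr (le_abs.2 (.inl ?_))
    linarith [(digit_mem_Icc h.param_mem_Icc i).2, (digit_mem_Icc h.param_mem_Icc j).1]

theorem abs_mem_of_mem_translations (h : IsDigitShift a x) {t : ℝ} (ht : t ∈ translations a) :
    |t| ∈ translationNorms a x := by
  suffices translations a ⊆ {t | |t| ∈ translationNorms a x} from this ht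
  refine translations_subset (by simp [translationNorms]) fun t ht i j => ?_
  rw [mem_ofPred_eq] at ht ⊢
  rcases abs_choice t with habs | habs <;> rw [habs] at ht
  · exact h.abs_step_mem ht i j
  · have hneg : 16 * t + (digit a j - digit a i) = -(16 * -t + (digit a i - digit a j)) := by ring
    rw [hneg, abs_neg]
    exact h.abs_step_mem ht j i

theorem wsp2 (h : IsDigitShift a x) : WSP2 a := by
  refine ⟨1 / 4, by norm_num, fun σ τ hl hne => ?_⟩
  rcases h.abs_mem_of_mem_translations ⟨σ, τ, hl.symm, rfl⟩ with ((h₀ | ha) | ⟨n, hn⟩) | h₁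
  · exact absurd (abs_eq_zero.1 h₀) hne
  · rw [mem_singleton_iff] at ha
    linarith [h.param_eq, h.le_apply 0]
  · linarith [h.le_apply n]
  · linarith [mem_Ici.1 h₁]

theorem forwardOrbit_seed_subset (h : IsDigitShift a x) :
    forwardOrbit a seed ⊆ Ioo 0 1 :=
  forwardOrbit_subset (Ioo_subset_Ioo (by norm_num) (by norm_num)) (mapsTo_S2_Ioo h.param_mem_Icc)

theorem S2_sub_ne_of_mem_seed (h : IsDigitShift a x) {y z : ℝ} (hy : y ∈ Ioo 0 1)
    (hz : z ∈ seed) (i : Fin 5) (n : ℕ) : S2 a i y - z ≠ x n := by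
  intro he
  rw [S2_apply] at he
  obtain ⟨hy₀, hy₁⟩ := hy
  obtain ⟨hz₀, hz₁⟩ := hz
  have := h.param_eq
  have := h.apply_le_one 0
  have := h.le_apply_zero
  have := h.le_apply (n + 1)
  have := h.apply_le_one (n + 1)
  rcases h.apply_succ n with hn | hn <;> fin_cases i <;> grind [digit]

theorem sub_ne_of_mem_forwardOrbit (h : IsDigitShift a x) {y z : ℝ}
    (hy : y ∈ forwardOrbit a seed) (hz : z ∈ forwardOrbit a seed) (n : ℕ) : y - z ≠ x n := by
  induction hy generalizing z n with
  | base hu => linarith [h.le_apply n, hu.2, (h.forwardOrbit_seed_subset hz).1]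
  | @map i y hy ih =>
    have hy' := h.forwardOrbit_seed_subset hy
    cases hz with
    | base hv => exact h.S2_sub_ne_of_mem_seed hy' hv i n
    | @map j z hz =>
      intro he
      have hz' := h.forwardOrbit_seed_subset hz
      rw [S2_apply, S2_apply] at he
      have hyz : y - z = 16 * x n + (digit a j - digit a i) := by linarith
      have hlt : |y - z| < 1 := abs_lt.2 ⟨by linarith [hy'.1, hz'.2], by linarith [hy'.2, hz'.1]⟩
      rcases h.shift_step n i j with hx | h₁
      · exact ih hz (n + 1) (hyz.trans hx)
      · exact (hyz ▸ hlt).not_ge h₁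

theorem ftc2 (h : IsDigitShift a x) : FTC2 a := by
  refine ⟨forwardOrbit a seed, ⟨3 / 32, .base (by norm_num [seed])⟩,
    isOpen_forwardOrbit a isOpen_Ioo, image_S2_forwardOrbit_subset a seed,
    finite_range_Ntype2_iff.2 ?_⟩
  refine (toFinite {0, 16 * a, -(16 * a)}).subset fun t ⟨ht, hsub⟩ => ?_
  obtain ⟨y, hy, z, hz, hyz⟩ := abs_mem_sub_self hsub
  rcases h.abs_mem_of_mem_translations ht with ((h₀ | ha) | ⟨n, hn⟩) | h₁
  · exact .inl (abs_eq_zero.1 h₀)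
  · exact .inr (eq_or_eq_neg_of_abs_eq ha)
  · exact absurd (hyz.trans hn.symm) (h.sub_ne_of_mem_forwardOrbit hy hz n)
  · have hy' := h.forwardOrbit_seed_subset hy
    have hz' := h.forwardOrbit_seed_subset hz
    linarith [hy'.2, hz'.1, mem_Ici.1 h₁]

theorem apply_mem_translations (h : IsDigitShift a x) (n : ℕ) : x n ∈ translations a := by
  induction n with
  | zero =>
    have := step_mem_translations (step_mem_translations (zero_mem_translations a) 0 1) 3 0
    convert this using 1
    grind [digit, h.param_eq]
  | succ n ih =>
    rcases h.apply_succ n with hn | hn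
    · convert step_mem_translations ih 4 3 using 1
      grind [digit]
    · convert step_mem_translations ih 4 0 using 1
      grind [digit]

theorem apply_lt_one (h : IsDigitShift a x) (hinj : x.Injective) (n : ℕ) : x n < 1 := by
  refine (h.apply_le_one n).lt_of_ne fun hn => n.succ_ne_self (hinj ?_)
  rcases h.apply_succ n with hs | hs <;> linarith [h.apply_le_one (n + 1)]

theorem not_ftcco2 (h : IsDigitShift a x) (hinj : x.Injective) : ¬ FTCco2 a := by
  intro hfin
  refine infinite_range_of_injective hinj ((finite_range_Ntype2_iff.1 hfin).subset ?_)
  rintro _ ⟨n, rfl⟩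
  have := h.le_apply n
  have := h.apply_lt_one hinj n
  refine ⟨h.apply_mem_translations n, (1 + x n) / 2, ?_, (1 - x n) / 2, ?_, by ring⟩ <;>
    constructor <;> linarith

end IsDigitShift

/-- The real number with base-16 digits `15` where `f` is `true` and `4` where it is `false`. -/
noncomputable def ofFourFifteen (f : ℕ → Bool) : ℝ :=
  4 / 15 + 11 / 16 * Cardinal.cantorFunction (1 / 16) f

theorem le_ofFourFifteen (f : ℕ → Bool) : 4 / 15 ≤ ofFourFifteen f := by
  have : 0 ≤ Cardinal.cantorFunction (1 / 16) f :=
    tsum_nonneg fun _ => Cardinal.cantorFunctionAux_nonneg (by norm_num)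
  rw [ofFourFifteen]
  linarith

theorem ofFourFifteen_succ (f : ℕ → Bool) :
    16 * ofFourFifteen f = cond (f 0) 15 4 + ofFourFifteen fun n => f (n + 1) := by
  rw [ofFourFifteen, ofFourFifteen,
    Cardinal.cantorFunction_succ f (by norm_num) (by norm_num)]
  cases f 0 <;> simp <;> ring

theorem ofFourFifteen_le_one (f : ℕ → Bool) : ofFourFifteen f ≤ 1 := by
  have hle : ofFourFifteen f ≤ ofFourFifteen fun _ => true := by
    rw [ofFourFifteen, ofFourFifteen]
    gcongr
    exact Cardinal.cantorFunction_le (by norm_num) (by norm_num) fun _ _ => rfl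
  have htrue := ofFourFifteen_succ fun _ => true
  rw [cond_true] at htrue
  linarith

theorem ofFourFifteen_injective : Function.Injective ofFourFifteen := fun _ _ h =>
  Cardinal.cantorFunction_injective (by norm_num) (by norm_num)
    (mul_left_cancel₀ (by norm_num) (add_left_cancel h))

theorem isDigitShift_ofFourFifteen {f : ℕ → Bool} (hf : f 0 = true) :
    IsDigitShift ((11 + ofFourFifteen f) / 256) fun n => ofFourFifteen fun k => f (n + k) where
  le_apply _ := le_ofFourFifteen _
  apply_le_one _ := ofFourFifteen_le_one _
  apply_succ n := by
    have h := ofFourFifteen_succ fun k => f (n + k)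
    simp only [add_zero, add_assoc, add_comm 1] at h ⊢
    cases hn : f n <;> simp_all
  apply_zero := by
    simpa [hf, add_comm 1] using ofFourFifteen_succ f
  param_eq := by
    simp only [zero_add]
    ring

-- For `m < n` the shift `k = n² - m` separates them: `m + k` is a square, and `n + k` lies strictly
-- between the squares of `n` and `n + 1`.
theorem injective_isSquare_add :
    Function.Injective fun n k : ℕ => decide (IsSquare (n + k)) := by
  intro m n h
  wlog hmn : m < n generalizing m n
  · by_contra hne
    exact hne (this h.symm (by omega)).symm
  have hle : m ≤ n * n := hmn.le.trans n.le_mul_self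
  have hsq : IsSquare (n + (n * n - m)) := by
    have hk := decide_eq_decide.1 (congrFun h (n * n - m))
    rw [Nat.add_sub_of_le hle] at hk
    exact hk.1 (IsSquare.mul_self n)
  obtain ⟨r, hr⟩ := hsq
  exact absurd ⟨r, hr.symm⟩ (Nat.not_exists_sq (m := n) (by omega) (by grind))

theorem stmt11 : ∃ a ∈ Ioo (0 : ℝ) (1 / 16),
    WSP2 a ∧ FTC2 a ∧ ¬ OSC2 a ∧ ¬ OSCco2 a ∧ ¬ FTCco2 a := by
  have hshift := isDigitShift_ofFourFifteen (f := fun k => decide (IsSquare k)) (by simp)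
  have hinj := ofFourFifteen_injective.comp injective_isSquare_add
  exact ⟨_, hshift.param_mem_Ioo, hshift.wsp2, hshift.ftc2, not_osc2 _, fun h => not_osc2 _ h.osc2,
    hshift.not_ftcco2 hinj⟩
end
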